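/- Let m ≥ 1 be an integer, h = 2m, let 𝔅 be the 2h×2h complex matrix given in block form by 𝔅 = [[O_h, (1/2)I_h],[(1/2)I_h, O_h]], and let J_m be the h×h skew-symmetric matrix consisting of m diagonal 2×2 blocks [[0,1],[−1,0]]. Consider the ℂ-linear map Φ from so(2h,Q) = {H ∈ M(2h,ℂ) : Hᵗ·𝔅 = −𝔅·H} to the triple product Skew(h,ℂ)³ of the space of skew-symmetric h×h complex matrices, defined on H = [[H₁₁, H₁₂],[H₂₁, H₂₂]] by Φ(H) = (H₂₁ᵗ, H₂₁ᵗ + J_m·H₂₂ᵗ − H₁₁ᵗ·J_m − J_m·H₁₂ᵗ·J_m, H₂₁ᵗ − J_m·H₂₂ᵗ + H₁₁ᵗ·J_m − J_m·H₁₂ᵗ·J_m). Then each of the three components of Φ(H) is indeed a skew-symmetric matrix, and Φ is surjective onto Skew(h,ℂ)³. -/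

import Mathlib

open Matrix

/-- The `2m×2m` skew-symmetric matrix `J_m` with `m` diagonal blocks `[[0,1],[-1,0]]`
(here `h = 2m`). -/
noncomputable def Jmat (m : ℕ) : Matrix (Fin 2 × Fin m) (Fin 2 × Fin m) ℂ :=
  Matrix.blockDiagonal fun _ : Fin m => !![0, 1; -1, 0]

/-- The matrix `𝔅 = [[O_h, (1/2)I_h],[(1/2)I_h, O_h]]` of the quadratic form, `h = 2m`. -/
noncomputable def Bmat (m : ℕ) :
    Matrix ((Fin 2 × Fin m) ⊕ (Fin 2 × Fin m)) ((Fin 2 × Fin m) ⊕ (Fin 2 × Fin m)) ℂ :=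
  Matrix.fromBlocks 0 ((1 / 2 : ℂ) • 1) ((1 / 2 : ℂ) • 1) 0

/-- The first component of the differential `Φ`: `H ↦ H₂₁ᵗ`. -/
noncomputable def Phi₁ (m : ℕ)
    (H : Matrix ((Fin 2 × Fin m) ⊕ (Fin 2 × Fin m)) ((Fin 2 × Fin m) ⊕ (Fin 2 × Fin m)) ℂ) :
    Matrix (Fin 2 × Fin m) (Fin 2 × Fin m) ℂ :=
  (H.toBlocks₂₁)ᵀ

/-- The second component of `Φ`: `H ↦ H₂₁ᵗ + J_m H₂₂ᵗ - H₁₁ᵗ J_m - J_m H₁₂ᵗ J_m`. -/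
noncomputable def Phi₂ (m : ℕ)
    (H : Matrix ((Fin 2 × Fin m) ⊕ (Fin 2 × Fin m)) ((Fin 2 × Fin m) ⊕ (Fin 2 × Fin m)) ℂ) :
    Matrix (Fin 2 × Fin m) (Fin 2 × Fin m) ℂ :=
  (H.toBlocks₂₁)ᵀ + Jmat m * (H.toBlocks₂₂)ᵀ - (H.toBlocks₁₁)ᵀ * Jmat m
    - Jmat m * (H.toBlocks₁₂)ᵀ * Jmat m

/-- The third component of `Φ`: `H ↦ H₂₁ᵗ - J_m H₂₂ᵗ + H₁₁ᵗ J_m - J_m H₁₂ᵗ J_m`. -/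
noncomputable def Phi₃ (m : ℕ)
    (H : Matrix ((Fin 2 × Fin m) ⊕ (Fin 2 × Fin m)) ((Fin 2 × Fin m) ⊕ (Fin 2 × Fin m)) ℂ) :
    Matrix (Fin 2 × Fin m) (Fin 2 × Fin m) ℂ :=
  (H.toBlocks₂₁)ᵀ - Jmat m * (H.toBlocks₂₂)ᵀ + (H.toBlocks₁₁)ᵀ * Jmat m
    - Jmat m * (H.toBlocks₁₂)ᵀ * Jmat m

theorem Jmat_transpose_aux (m : ℕ) : (Jmat m)ᵀ = -Jmat m := by
  unfold Jmat
  rw [Matrix.blockDiagonal_transpose, ← Matrix.blockDiagonal_neg]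
  congr 1
  funext k
  ext i j
  fin_cases i <;> fin_cases j <;> simp

theorem Jmat_sq_aux (m : ℕ) : Jmat m * Jmat m = -1 := by
  unfold Jmat
  rw [← Matrix.blockDiagonal_mul, ← Matrix.blockDiagonal_one, ← Matrix.blockDiagonal_neg]
  congr 1
  funext k
  ext i j
  fin_cases i <;> fin_cases j <;> simp [Matrix.mul_apply]

theorem so_iff_aux (m : ℕ) (a b c d : Matrix (Fin 2 × Fin m) (Fin 2 × Fin m) ℂ) :
    (Matrix.fromBlocks a b c d)ᵀ * Bmat m = -(Bmat m * Matrix.fromBlocks a b c d) ↔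
      cᵀ = -c ∧ aᵀ = -d ∧ dᵀ = -a ∧ bᵀ = -b := by
  unfold Bmat
  rw [Matrix.fromBlocks_transpose, Matrix.fromBlocks_multiply, Matrix.fromBlocks_multiply,
    Matrix.fromBlocks_neg, Matrix.fromBlocks_inj]
  have key : ∀ x y : Matrix (Fin 2 × Fin m) (Fin 2 × Fin m) ℂ,
      (2⁻¹ : ℂ) • x = -((2⁻¹ : ℂ) • y) ↔ x = -y := by
    intro x y
    rw [← smul_neg]
    exact (smul_right_injective _ (by norm_num : (2⁻¹ : ℂ) ≠ 0)).eq_iff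
  simp [key]

/-- Each component of `Φ(H)` is skew-symmetric for `H ∈ so(2h,Q)`, and `Φ` maps
`so(2h,Q)` onto `Skew(h,ℂ)³`. -/
theorem Phi_skew_and_surjective (m : ℕ) (hm : 1 ≤ m) :
    (∀ H : Matrix ((Fin 2 × Fin m) ⊕ (Fin 2 × Fin m))
        ((Fin 2 × Fin m) ⊕ (Fin 2 × Fin m)) ℂ,
      Hᵀ * Bmat m = -(Bmat m * H) →
        (Phi₁ m H)ᵀ = -(Phi₁ m H) ∧ (Phi₂ m H)ᵀ = -(Phi₂ m H) ∧
          (Phi₃ m H)ᵀ = -(Phi₃ m H)) ∧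
    (∀ A₁ A₂ A₃ : Matrix (Fin 2 × Fin m) (Fin 2 × Fin m) ℂ,
      A₁ᵀ = -A₁ → A₂ᵀ = -A₂ → A₃ᵀ = -A₃ →
        ∃ H : Matrix ((Fin 2 × Fin m) ⊕ (Fin 2 × Fin m))
            ((Fin 2 × Fin m) ⊕ (Fin 2 × Fin m)) ℂ,
          Hᵀ * Bmat m = -(Bmat m * H) ∧
            Phi₁ m H = A₁ ∧ Phi₂ m H = A₂ ∧ Phi₃ m H = A₃) := by
  have hJ := Jmat_transpose_aux m
  have hJJ := Jmat_sq_aux m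
  have hJJ' : ∀ x : Matrix (Fin 2 × Fin m) (Fin 2 × Fin m) ℂ,
      Jmat m * (Jmat m * x) = -x := by
    intro x
    rw [← Matrix.mul_assoc, hJJ, neg_one_mul]
  constructor
  · intro H hH
    rw [← Matrix.fromBlocks_toBlocks H] at hH
    obtain ⟨hc, ha, hd, hb⟩ := (so_iff_aux m _ _ _ _).1 hH
    refine ⟨?_, ?_, ?_⟩
    · simp only [Phi₁, hc, Matrix.transpose_neg]
    · simp only [Phi₂, hc, ha, hd, hb, hJ, Matrix.transpose_neg, Matrix.transpose_add,
        Matrix.transpose_sub, Matrix.transpose_mul]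
      noncomm_ring
    · simp only [Phi₃, hc, ha, hd, hb, hJ, Matrix.transpose_neg, Matrix.transpose_add,
        Matrix.transpose_sub, Matrix.transpose_mul]
      noncomm_ring
  · intro A₁ A₂ A₃ h₁ h₂ h₃
    obtain ⟨S, hS⟩ : ∃ S, S = (2⁻¹ : ℂ) • (A₂ + A₃) - A₁ := ⟨_, rfl⟩
    obtain ⟨D, hD⟩ : ∃ D, D = (4⁻¹ : ℂ) • (A₂ - A₃) := ⟨_, rfl⟩
    have hSt : Sᵀ = -S := by
      rw [hS]
      simp only [Matrix.transpose_sub, Matrix.transpose_smul, Matrix.transpose_add, h₁, h₂, h₃]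
      module
    have hDt : Dᵀ = -D := by
      rw [hD]
      simp only [Matrix.transpose_sub, Matrix.transpose_smul, h₂, h₃]
      module
    refine ⟨Matrix.fromBlocks (Jmat m * D) (Jmat m * S * Jmat m) (-A₁) (-(D * Jmat m)),
      (so_iff_aux m _ _ _ _).2 ⟨?_, ?_, ?_, ?_⟩, ?_, ?_, ?_⟩
    · simp [h₁]
    · simp [hJ, hDt]
    · simp [hJ, hDt]
    · simp [hJ, hSt, Matrix.mul_assoc]
    · simp [Phi₁, h₁]
    · simp only [Phi₂, Matrix.toBlocks_fromBlocks₁₁, Matrix.toBlocks_fromBlocks₁₂,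
        Matrix.toBlocks_fromBlocks₂₁, Matrix.toBlocks_fromBlocks₂₂, Matrix.transpose_neg,
        Matrix.transpose_mul, h₁, hSt, hDt, hJ, Matrix.mul_assoc, Matrix.neg_mul, Matrix.mul_neg,
        neg_neg, hJJ, hJJ', mul_one]
      rw [hS, hD]
      module
    · simp only [Phi₃, Matrix.toBlocks_fromBlocks₁₁, Matrix.toBlocks_fromBlocks₁₂,
        Matrix.toBlocks_fromBlocks₂₁, Matrix.toBlocks_fromBlocks₂₂, Matrix.transpose_neg,
        Matrix.transpose_mul, h₁, hSt, hDt, hJ, Matrix.mul_assoc, Matrix.neg_mul, Matrix.mul_neg,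
        neg_neg, hJJ, hJJ', mul_one]
      rw [hS, hD]
      module
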